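/- Let R be a strongly regular right cell of a fiat category C with involution *. Then R contains an indecomposable 1-morphism G with G isomorphic to G*, and this element is unique: any F in R with F isomorphic to F* is isomorphic to G. (The element G is the Duflo element G_R of the right cell R.) -/

import Mathlib

open CategoryTheory CategoryTheory.Limits

universe w v u

attribute [local instance] CategoryTheory.Limits.hasBinaryBiproducts_of_finite_biproducts

namespace CellTwoRep

variable {C : Type u} [Bicategory.{w, v} C]

/-- `G` is a retract (direct summand) of `F` in a hom-category of the bicategory `C`. -/
def IsSummand {a b : C} (G F : a ⟶ b) : Prop :=
  ∃ (ι : G ⟶ F) (π : F ⟶ G), ι ≫ π = 𝟙 G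

/-- Cast a 1-morphism along equalities of objects. -/
def castHom {a a' b b' : C} (h₁ : a = a') (h₂ : b = b') (f : a ⟶ b) : a' ⟶ b' :=
  h₁ ▸ h₂ ▸ f

section Indec

variable [∀ a b : C, Preadditive (a ⟶ b)] [∀ a b : C, HasFiniteBiproducts (a ⟶ b)]

/-- An indecomposable 1-morphism: nonzero, and any decomposition as a biproduct is trivial. -/
def Indec {a b : C} (F : a ⟶ b) : Prop :=
  ¬ IsZero F ∧ ∀ G H : a ⟶ b, Nonempty (F ≅ G ⊞ H) → IsZero G ∨ IsZero H

end Indec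

/-- A 1-morphism of `C` together with its endpoints. -/
structure OneMor (C : Type u) [Bicategory.{w, v} C] where
  src : C
  tgt : C
  mor : src ⟶ tgt

/-- right preorder: `F ≤_R G` iff `G` is a direct summand of `H ∘ F` for some `H`. -/
def leR (F G : OneMor C) : Prop :=
  ∃ (h : F.src = G.src) (H : F.tgt ⟶ G.tgt),
    IsSummand G.mor (castHom h rfl F.mor ≫ H)

/-- left preorder: `F ≤_L G` iff `G` is a direct summand of `F ∘ H` for some `H`. -/
def leL (F G : OneMor C) : Prop :=
  ∃ (h : F.tgt = G.tgt) (H : G.src ⟶ F.src),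
    IsSummand G.mor (H ≫ castHom rfl h F.mor)

/-- two-sided preorder: `F ≤_LR G` iff `G` is a direct summand of `H₂ ∘ F ∘ H₁`. -/
def leLR (F G : OneMor C) : Prop :=
  ∃ (H₁ : G.src ⟶ F.src) (H₂ : F.tgt ⟶ G.tgt),
    IsSummand G.mor (H₁ ≫ F.mor ≫ H₂)

def simR (F G : OneMor C) : Prop := leR F G ∧ leR G F
def simL (F G : OneMor C) : Prop := leL F G ∧ leL G F
def simLR (F G : OneMor C) : Prop := leLR F G ∧ leLR G F

/-- Isomorphism of 1-morphisms (with possibly different, but equal, endpoints). -/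
def IsoM (F G : OneMor C) : Prop :=
  ∃ (h₁ : F.src = G.src) (h₂ : F.tgt = G.tgt), Nonempty (castHom h₁ h₂ F.mor ≅ G.mor)

section Cells

variable [∀ a b : C, Preadditive (a ⟶ b)] [∀ a b : C, HasFiniteBiproducts (a ⟶ b)]

def IndecM (F : OneMor C) : Prop := Indec F.mor

/-- A right cell: the `∼_R`-equivalence class of some indecomposable 1-morphism. -/
def IsRightCell (R : Set (OneMor C)) : Prop :=
  ∃ F : OneMor C, IndecM F ∧ R = {G | IndecM G ∧ simR F G}

def IsLeftCell (L : Set (OneMor C)) : Prop :=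
  ∃ F : OneMor C, IndecM F ∧ L = {G | IndecM G ∧ simL F G}

def IsTwoSidedCell (Q : Set (OneMor C)) : Prop :=
  ∃ F : OneMor C, IndecM F ∧ Q = {G | IndecM G ∧ simLR F G}

/-- The right order on cells. -/
def cellLeR (R R' : Set (OneMor C)) : Prop := ∃ F ∈ R, ∃ G ∈ R', leR F G

/-- The left order on cells. -/
def cellLeL (L L' : Set (OneMor C)) : Prop := ∃ F ∈ L, ∃ G ∈ L', leL F G

/-- A regular two-sided cell: distinct right cells inside it are incomparable for `≤_R`. -/
def IsRegular (Q : Set (OneMor C)) : Prop :=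
  IsTwoSidedCell Q ∧ ∀ R R' : Set (OneMor C), IsRightCell R → IsRightCell R' →
    R ⊆ Q → R' ⊆ Q → R ≠ R' → ¬ cellLeR R R' ∧ ¬ cellLeR R' R

/-- A strongly regular two-sided cell: regular, and every left cell meets every right cell
inside it in exactly one isomorphism class. -/
def IsStronglyRegular (Q : Set (OneMor C)) : Prop :=
  IsRegular Q ∧ ∀ L R : Set (OneMor C), IsLeftCell L → IsRightCell R → L ⊆ Q → R ⊆ Q →
    ∃ F, F ∈ L ∩ R ∧ ∀ G, G ∈ L ∩ R → IsoM F G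

end Cells

/-- All the axioms of a fiat (`k`-finitary with involution and adjunctions) 2-category,
on top of a strict bicategory whose hom-categories are additive and `k`-linear. -/
structure FiatAxioms (k : Type*) [Field k] [IsAlgClosed k]
    (C : Type u) [Bicategory.{w, v} C] [Bicategory.Strict C]
    [∀ a b : C, Preadditive (a ⟶ b)] [∀ a b : C, HasFiniteBiproducts (a ⟶ b)]
    [∀ a b : C, Linear k (a ⟶ b)] : Type (max u v w) where
  /-- finitely many objects -/
  finObj : Finite C
  /-- each hom-category is idempotent complete -/
  idemComplete : ∀ a b : C, IsIdempotentComplete (a ⟶ b)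
  /-- finite-dimensional spaces of 2-morphisms -/
  finDim : ∀ (a b : C) (f g : a ⟶ b), FiniteDimensional k (f ⟶ g)
  /-- finitely many isomorphism classes of indecomposable 1-morphisms -/
  finIndec : ∀ a b : C, ∃ (n : ℕ) (ι : Fin n → (a ⟶ b)),
      ∀ F : a ⟶ b, Indec F → ∃ i, Nonempty (F ≅ ι i)
  /-- each identity 1-morphism is indecomposable -/
  idIndec : ∀ a : C, Indec (𝟙 a)
  /-- horizontal composition is additive in the second variable -/
  whiskerLeft_add : ∀ {a b c : C} (f : a ⟶ b) {g h : b ⟶ c} (η θ : g ⟶ h),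
      Bicategory.whiskerLeft f (η + θ) =
        Bicategory.whiskerLeft f η + Bicategory.whiskerLeft f θ
  /-- horizontal composition is additive in the first variable -/
  whiskerRight_add : ∀ {a b c : C} {f g : a ⟶ b} (η θ : f ⟶ g) (h : b ⟶ c),
      Bicategory.whiskerRight (η + θ) h =
        Bicategory.whiskerRight η h + Bicategory.whiskerRight θ h
  /-- the involution on 1-morphisms -/
  star : ∀ {a b : C}, (a ⟶ b) → (b ⟶ a)
  /-- the involution on 2-morphisms -/
  star2 : ∀ {a b : C} {f g : a ⟶ b}, (f ⟶ g) → (star f ⟶ star g)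
  star2_id : ∀ {a b : C} (f : a ⟶ b), star2 (𝟙 f) = 𝟙 (star f)
  star2_comp : ∀ {a b : C} {f g h : a ⟶ b} (η : f ⟶ g) (θ : g ⟶ h),
      star2 (η ≫ θ) = star2 η ≫ star2 θ
  /-- the involution is a weak anti-homomorphism -/
  starComp : ∀ {a b c : C} (f : a ⟶ b) (g : b ⟶ c),
      Nonempty (star (f ≫ g) ≅ star g ≫ star f)
  starId : ∀ a : C, Nonempty (star (𝟙 a) ≅ 𝟙 a)
  /-- the involution is weakly involutive -/
  starStar : ∀ {a b : C} (f : a ⟶ b), Nonempty (star (star f) ≅ f)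
  /-- adjunctions: every 1-morphism `f` is left adjoint to `star f` -/
  adj : ∀ {a b : C} (f : a ⟶ b), Nonempty (Bicategory.Adjunction f (star f))


/-- The involution applied to a 1-morphism together with its endpoints. -/
def starM (k : Type*) [Field k] [IsAlgClosed k]
    {C : Type u} [Bicategory.{w, v} C] [Bicategory.Strict C]
    [∀ a b : C, Preadditive (a ⟶ b)] [∀ a b : C, HasFiniteBiproducts (a ⟶ b)]
    [∀ a b : C, Linear k (a ⟶ b)]
    (S : FiatAxioms k C) (F : OneMor C) : OneMor C :=
  ⟨F.tgt, F.src, S.star F.mor⟩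

section Summands

open Bicategory

theorem IsSummand.of_iso {a b : C} {F G : a ⟶ b} (e : G ≅ F) : IsSummand G F :=
  ⟨e.hom, e.inv, e.hom_inv_id⟩

theorem IsSummand.trans {a b : C} {F G H : a ⟶ b} (h₁ : IsSummand F G) (h₂ : IsSummand G H) :
    IsSummand F H := by
  obtain ⟨i, p, hip⟩ := h₁
  obtain ⟨j, q, hjq⟩ := h₂
  exact ⟨i ≫ j, q ≫ p, by rw [Category.assoc, reassoc_of% hjq, hip]⟩

theorem IsSummand.whiskerLeft {a b c : C} (H : a ⟶ b) {F G : b ⟶ c} (h : IsSummand F G) :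
    IsSummand (H ≫ F) (H ≫ G) := by
  obtain ⟨i, p, hip⟩ := h
  exact ⟨H ◁ i, H ◁ p, by rw [← Bicategory.whiskerLeft_comp, hip, Bicategory.whiskerLeft_id]⟩

theorem IsSummand.whiskerRight {a b c : C} {F G : a ⟶ b} (h : IsSummand F G) (H : b ⟶ c) :
    IsSummand (F ≫ H) (G ≫ H) := by
  obtain ⟨i, p, hip⟩ := h
  exact ⟨i ▷ H, p ▷ H, by rw [← Bicategory.comp_whiskerRight, hip, Bicategory.id_whiskerRight]⟩

/-- A left adjoint `l ⊣ r` is a direct summand of `l ≫ r ≫ l`, by the triangle identity. -/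
theorem IsSummand.of_adjunction {a b : C} {l : a ⟶ b} {r : b ⟶ a} (adj : Adjunction l r) :
    IsSummand l (l ≫ r ≫ l) := by
  refine ⟨(λ_ l).inv ≫ adj.unit ▷ l ≫ (α_ l r l).hom, l ◁ adj.counit ≫ (ρ_ l).hom, ?_⟩
  have h : adj.unit ▷ l ≫ (α_ l r l).hom ≫ l ◁ adj.counit = (λ_ l).hom ≫ (ρ_ l).inv := by
    rw [← adj.left_triangle]
    simp [leftZigzag, bicategoricalComp]
  simp [reassoc_of% h]

end Summands

section Preorders

open Bicategory

theorem leR.trans {F G H : OneMor C} (h₁ : leR F G) (h₂ : leR G H) : leR F H := by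
  obtain ⟨a, b, F⟩ := F
  obtain ⟨a', b', G⟩ := G
  obtain ⟨a'', b'', H⟩ := H
  obtain ⟨rfl : a = a', K, hK⟩ := h₁
  obtain ⟨rfl : a = a'', M, hM⟩ := h₂
  exact ⟨rfl, K ≫ M, (hM.trans (hK.whiskerRight M)).trans (.of_iso (α_ F K M))⟩

theorem leL.trans {F G H : OneMor C} (h₁ : leL F G) (h₂ : leL G H) : leL F H := by
  obtain ⟨a, b, F⟩ := F
  obtain ⟨a', b', G⟩ := G
  obtain ⟨a'', b'', H⟩ := H
  obtain ⟨rfl : b = b', K, hK⟩ := h₁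
  obtain ⟨rfl : b = b'', M, hM⟩ := h₂
  exact ⟨rfl, M ≫ K, (hM.trans (hK.whiskerLeft M)).trans (.of_iso (α_ M K F).symm)⟩

theorem leLR.trans {F G H : OneMor C} (h₁ : leLR F G) (h₂ : leLR G H) : leLR F H := by
  obtain ⟨K₁, K₂, hK⟩ := h₁
  obtain ⟨M₁, M₂, hM⟩ := h₂
  refine ⟨M₁ ≫ K₁, K₂ ≫ M₂, (hM.trans ((hK.whiskerRight M₂).whiskerLeft M₁)).trans (.of_iso ?_)⟩
  exact whiskerLeftIso M₁ (α_ _ _ _ ≪≫ whiskerLeftIso K₁ (α_ _ _ _)) ≪≫ (α_ _ _ _).symm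

theorem leL.leLR {F G : OneMor C} (h : leL F G) : leLR F G := by
  obtain ⟨a, b, F⟩ := F
  obtain ⟨a', b', G⟩ := G
  obtain ⟨rfl : b = b', K, hK⟩ := h
  exact ⟨K, 𝟙 b, hK.trans (.of_iso (whiskerLeftIso K (ρ_ F).symm))⟩

theorem IsoM.symm {F G : OneMor C} (h : IsoM F G) : IsoM G F := by
  obtain ⟨a, b, F⟩ := F
  obtain ⟨a', b', G⟩ := G
  obtain ⟨rfl : a = a', rfl : b = b', ⟨e⟩⟩ := h
  exact ⟨rfl, rfl, ⟨e.symm⟩⟩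

theorem IsoM.leR {F G : OneMor C} (h : IsoM F G) : leR F G := by
  obtain ⟨a, b, F⟩ := F
  obtain ⟨a', b', G⟩ := G
  obtain ⟨rfl : a = a', rfl : b = b', ⟨e⟩⟩ := h
  exact ⟨rfl, 𝟙 b, .of_iso (e.symm ≪≫ (ρ_ F).symm)⟩

theorem IsoM.leL {F G : OneMor C} (h : IsoM F G) : leL F G := by
  obtain ⟨a, b, F⟩ := F
  obtain ⟨a', b', G⟩ := G
  obtain ⟨rfl : a = a', rfl : b = b', ⟨e⟩⟩ := h
  exact ⟨rfl, 𝟙 a, .of_iso (e.symm ≪≫ (λ_ F).symm)⟩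

theorem simR.trans {F G H : OneMor C} (h₁ : simR F G) (h₂ : simR G H) : simR F H :=
  ⟨h₁.1.trans h₂.1, h₂.2.trans h₁.2⟩

theorem simL.trans {F G H : OneMor C} (h₁ : simL F G) (h₂ : simL G H) : simL F H :=
  ⟨h₁.1.trans h₂.1, h₂.2.trans h₁.2⟩

theorem simLR.trans {F G H : OneMor C} (h₁ : simLR F G) (h₂ : simLR G H) : simLR F H :=
  ⟨h₁.1.trans h₂.1, h₂.2.trans h₁.2⟩

theorem simL.simLR {F G : OneMor C} (h : simL F G) : simLR F G :=
  ⟨h.1.leLR, h.2.leLR⟩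

theorem IsoM.simR {F G : OneMor C} (h : IsoM F G) : simR F G :=
  ⟨h.leR, h.symm.leR⟩

theorem IsoM.simL {F G : OneMor C} (h : IsoM F G) : simL F G :=
  ⟨h.leL, h.symm.leL⟩

end Preorders

section Indecomposables

variable [∀ a b : C, Preadditive (a ⟶ b)] [∀ a b : C, HasFiniteBiproducts (a ⟶ b)]

/-- In an idempotent complete hom-category, an indecomposable 1-morphism has only trivial
idempotent endomorphisms. -/
theorem Indec.idempotent_eq_zero_or_id {a b : C} [IsIdempotentComplete (a ⟶ b)] {F : a ⟶ b}
    (hF : Indec F) (e : F ⟶ F) (he : e ≫ e = e) : e = 0 ∨ e = 𝟙 F := by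
  obtain ⟨G, i, p, hip, hpi⟩ := IsIdempotentComplete.idempotents_split F e he
  obtain ⟨H, j, q, hjq, hqj⟩ := IsIdempotentComplete.idempotents_split F (𝟙 F - e)
    (Idempotents.idem_of_id_sub_idem e he)
  have hsum : p ≫ i + q ≫ j = 𝟙 F := by rw [hpi, hqj]; abel
  have hiq : i ≫ q = 0 := by
    have h : i ≫ (q ≫ j) ≫ q = 0 := by
      rw [hqj, ← hpi, Preadditive.sub_comp, Preadditive.comp_sub]
      simp [reassoc_of% hip]
    simpa [hjq] using h
  have hjp : j ≫ p = 0 := by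
    have h : j ≫ (p ≫ i) ≫ p = 0 := by
      rw [eq_sub_of_add_eq hsum, Preadditive.sub_comp, Preadditive.comp_sub]
      simp [reassoc_of% hjq]
    simpa [hip] using h
  have iso : F ≅ G ⊞ H :=
    { hom := biprod.lift p q
      inv := biprod.desc i j
      hom_inv_id := by rw [biprod.lift_desc, hsum]
      inv_hom_id := by ext <;> simp [hip, hjq, hiq, hjp] }
  refine (hF.2 G H ⟨iso⟩).imp (fun hG ↦ ?_) (fun hH ↦ ?_)
  · rw [← hpi, hG.eq_zero_of_tgt p, zero_comp]
  · have h : 𝟙 F - e = 0 := by rw [← hqj, hH.eq_zero_of_tgt q, zero_comp]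
    exact (sub_eq_zero.mp h).symm

theorem indec_of_idempotents {a b : C} {F : a ⟶ b} (h₀ : 𝟙 F ≠ 0)
    (h : ∀ e : F ⟶ F, e ≫ e = e → e = 0 ∨ e = 𝟙 F) : Indec F := by
  refine ⟨fun hz ↦ h₀ (hz.eq_zero_of_src _), ?_⟩
  rintro G H ⟨φ⟩
  refine (h (φ.hom ≫ biprod.fst ≫ biprod.inl ≫ φ.inv) (by simp)).imp (fun he ↦ ?_) (fun he ↦ ?_)
  · rw [IsZero.iff_id_eq_zero]
    have := congrArg (fun t ↦ biprod.inl ≫ φ.inv ≫ t ≫ φ.hom ≫ biprod.fst) he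
    simpa using this
  · rw [IsZero.iff_id_eq_zero]
    have := congrArg (fun t ↦ biprod.inr ≫ φ.inv ≫ t ≫ φ.hom ≫ biprod.snd) he
    simpa using this.symm

/-- A right adjoint of an indecomposable 1-morphism is indecomposable, since taking conjugates
identifies the endomorphism monoids up to reversal. -/
theorem Indec.of_adjunction {a b : C} [IsIdempotentComplete (a ⟶ b)] {l : a ⟶ b} {r : b ⟶ a}
    (adj : Bicategory.Adjunction l r) (hl : Indec l) : Indec r := by
  have hcomp := Bicategory.conjugateEquiv_comp adj adj adj
  have hid := Bicategory.conjugateEquiv_id adj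
  generalize Bicategory.conjugateEquiv adj adj = φ at hcomp hid
  have hzero : φ 0 = 0 := by
    have h := hcomp (φ.symm 0) 0
    rwa [zero_comp, Equiv.apply_symm_apply, zero_comp, eq_comm] at h
  refine indec_of_idempotents (fun h ↦ hl.1 ?_) (fun e he ↦ ?_)
  · rw [IsZero.iff_id_eq_zero]
    exact φ.injective (by rw [hid, hzero, h])
  · obtain ⟨e, rfl⟩ := φ.surjective e
    rw [hcomp, φ.apply_eq_iff_eq] at he
    exact (hl.idempotent_eq_zero_or_id e he).imp (fun h ↦ by rw [h, hzero])
      (fun h ↦ by rw [h, hid])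

end Indecomposables

section Star

variable {k : Type*} [Field k] [IsAlgClosed k] [Bicategory.Strict C]
  [∀ a b : C, Preadditive (a ⟶ b)] [∀ a b : C, HasFiniteBiproducts (a ⟶ b)]
  [∀ a b : C, Linear k (a ⟶ b)] (S : FiatAxioms k C)

theorem IsSummand.star {a b : C} {F G : a ⟶ b} (h : IsSummand F G) :
    IsSummand (S.star F) (S.star G) := by
  obtain ⟨i, p, hip⟩ := h
  exact ⟨S.star2 i, S.star2 p, by rw [← S.star2_comp, hip, S.star2_id]⟩

theorem isoM_starM_starM (F : OneMor C) : IsoM (starM k S (starM k S F)) F :=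
  ⟨rfl, rfl, S.starStar F.mor⟩

theorem IndecM.starM {F : OneMor C} (hF : IndecM F) : IndecM (starM k S F) := by
  have := S.idemComplete F.src F.tgt
  exact Indec.of_adjunction (l := F.mor) (S.adj F.mor).some hF

theorem leR.starM {F G : OneMor C} (h : leR F G) : leL (starM k S F) (starM k S G) := by
  obtain ⟨a, b, F⟩ := F
  obtain ⟨a', b', G⟩ := G
  obtain ⟨rfl : a = a', K, hK⟩ := h
  exact ⟨rfl, S.star K, (hK.star S).trans (.of_iso (S.starComp F K).some)⟩

theorem leL.starM {F G : OneMor C} (h : leL F G) : leR (starM k S F) (starM k S G) := by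
  obtain ⟨a, b, F⟩ := F
  obtain ⟨a', b', G⟩ := G
  obtain ⟨rfl : b = b', K, hK⟩ := h
  exact ⟨rfl, S.star K, (hK.star S).trans (.of_iso (S.starComp K F).some)⟩

theorem simR.starM {F G : OneMor C} (h : simR F G) : simL (starM k S F) (starM k S G) :=
  ⟨h.1.starM S, h.2.starM S⟩

theorem simL.starM {F G : OneMor C} (h : simL F G) : simR (starM k S F) (starM k S G) :=
  ⟨h.1.starM S, h.2.starM S⟩

theorem leLR_starM_self (F : OneMor C) : leLR (starM k S F) F :=
  ⟨F.mor, F.mor, .of_adjunction (S.adj F.mor).some⟩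

theorem simLR_starM (F : OneMor C) : simLR F (starM k S F) :=
  ⟨(isoM_starM_starM S F).symm.leL.leLR.trans (leLR_starM_self S (starM k S F)),
    leLR_starM_self S F⟩

end Star

/-- A strongly regular right cell `R` of a fiat category contains an
element `G` with `G ≅ G*` (the Duflo element), unique up to isomorphism. -/
theorem duflo_element_exists_unique
    (k : Type*) [Field k] [IsAlgClosed k]
    {C : Type u} [Bicategory.{w, v} C] [Bicategory.Strict C]
    [∀ a b : C, Preadditive (a ⟶ b)] [∀ a b : C, HasFiniteBiproducts (a ⟶ b)]
    [∀ a b : C, Linear k (a ⟶ b)]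
    (S : FiatAxioms k C)
    (R : Set (OneMor C)) (hR : IsRightCell R)
    (hsr : ∃ Q : Set (OneMor C), IsStronglyRegular Q ∧ R ⊆ Q) :
    ∃ G ∈ R, IsoM G (starM k S G) ∧
      ∀ F ∈ R, IsoM F (starM k S F) → IsoM F G := by
  obtain ⟨Q, ⟨⟨⟨F₀, -, rfl⟩, -⟩, hinter⟩, hRQ⟩ := hsr
  obtain ⟨F, hF, rfl⟩ := hR
  have hF₀ : simLR F₀ F := (hRQ ⟨hF, IsoM.simR ⟨rfl, rfl, ⟨Iso.refl _⟩⟩⟩).2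
  obtain ⟨G, ⟨hGL, hGR⟩, hG⟩ := hinter {G | IndecM G ∧ simL (starM k S F) G} _
    ⟨starM k S F, hF.starM S, rfl⟩ ⟨F, hF, rfl⟩
    (fun H hH ↦ ⟨hH.1, (hF₀.trans (simLR_starM S F)).trans hH.2.simLR⟩) hRQ
  refine ⟨G, hGR, hG _ ⟨⟨hGR.1.starM S, hGR.2.starM S⟩, hGR.1.starM S, ?_⟩, fun H hH e ↦ ?_⟩
  · exact (isoM_starM_starM S F).symm.simR.trans (hGL.2.starM S)
  · exact (hG H ⟨⟨hH.1, (hH.2.starM S).trans e.symm.simL⟩, hH⟩).symm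

end CellTwoRep
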